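/- arXiv:1411.2333 — 4 statements merged into one kernel-verified Lean document; each statement's English description precedes it below -/
import Mathlib

section
/- (Exact penalization, forward direction) Let X be a real Banach space, S ⊆ X, and let f : S → ℝ be Lipschitz on S with constant K. Let C ⊆ S be nonempty and suppose x ∈ C minimizes f over C, i.e. f(y) ≥ f(x) for all y ∈ C. Then for every K̂ ≥ K the function g(y) := f(y) + K̂·d_C(y) attains its minimum over S at x, i.e. g(y) ≥ g(x) for all y ∈ S. -/
open NNReal

/-- Exact penalization, forward direction: if `f` is `K`-Lipschitz on `S`, `x ∈ C ⊆ S`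
minimizes `f` over `C`, and `K̂ ≥ K`, then `g(y) = f(y) + K̂·d_C(y)` attains its minimum
over `S` at `x`. -/
theorem exact_penalization_forward
    {X : Type*} [NormedAddCommGroup X] [NormedSpace ℝ X] [CompleteSpace X]
    (S C : Set X) (f : X → ℝ) (K : ℝ≥0) (hf : LipschitzOnWith K f S)
    (hCne : C.Nonempty) (hCS : C ⊆ S) (x : X) (hx : x ∈ C)
    (hmin : ∀ y ∈ C, f x ≤ f y) (Khat : ℝ) (hK : (K : ℝ) ≤ Khat) :
    ∀ y ∈ S, f x + Khat * Metric.infDist x C ≤ f y + Khat * Metric.infDist y C := by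
  intro y hy
  have hKhat : 0 ≤ Khat := K.coe_nonneg.trans hK
  have : Nonempty C := hCne.to_subtype
  rw [Metric.infDist_zero_of_mem hx, mul_zero, add_zero, ← sub_le_iff_le_add',
    Metric.infDist_eq_iInf, Real.mul_iInf_of_nonneg hKhat]
  -- The infimum need not be attained, so `f x - f y ≤ Khat * dist y c` is shown for every `c ∈ C`.
  refine le_ciInf fun c => ?_
  have hLip := hf.dist_le_mul c (hCS c.2) y hy
  rw [Real.dist_eq, dist_comm] at hLip
  calc f x - f y ≤ f c - f y := sub_le_sub_right (hmin c c.2) _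
    _ ≤ |f c - f y| := le_abs_self _
    _ ≤ K * dist y c := hLip
    _ ≤ Khat * dist y c := mul_le_mul_of_nonneg_right hK dist_nonneg
end

section
/- (Exact penalization, converse direction) Let X be a real Banach space, S ⊆ X, and let f : S → ℝ be Lipschitz on S with constant K. Let C ⊆ S be nonempty and closed, let x ∈ C minimize f over C, and let K̂ > K. If y ∈ S minimizes the function g := f + K̂·d_C over S, then necessarily y ∈ C. -/
/-!
If `y ∉ C`, then `d = d_C(y) > 0` because `C` is closed. Minimality of `y` and the Lipschitz
bound give `f y + Khat * d ≤ f z ≤ f y + K * ‖y - z‖` for every `z ∈ C`; taking the infimum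
over `z` yields `Khat * d ≤ K * d`, contradicting `K < Khat`.
-/

open NNReal

/-- Exact penalization, converse direction: with `C ⊆ S` nonempty and closed, `x ∈ C`
minimizing `f` over `C`, and `K̂ > K`, any minimizer over `S` of `g = f + K̂·d_C` must
belong to `C`. -/
theorem exact_penalization_converse
    {X : Type*} [NormedAddCommGroup X] [NormedSpace ℝ X] [CompleteSpace X]
    (S C : Set X) (f : X → ℝ) (K : ℝ≥0) (hf : LipschitzOnWith K f S)
    (hCne : C.Nonempty) (hCclosed : IsClosed C) (hCS : C ⊆ S) (x : X) (hx : x ∈ C)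
    (hmin : ∀ z ∈ C, f x ≤ f z) (Khat : ℝ) (hK : (K : ℝ) < Khat)
    (y : X) (hy : y ∈ S)
    (hymin : ∀ z ∈ S, f y + Khat * Metric.infDist y C ≤ f z + Khat * Metric.infDist z C) :
    y ∈ C := by
  by_contra hyC
  have hd : 0 < Metric.infDist y C := (hCclosed.notMem_iff_infDist_pos hCne).1 hyC
  -- Comparing `y` with a point `z` of `C`, where the penalty vanishes.
  have key : ∀ z ∈ C, Khat * Metric.infDist y C ≤ K * dist y z := by
    intro z hz
    have h1 := hymin z (hCS hz)
    rw [Metric.infDist_zero_of_mem hz, mul_zero, add_zero] at h1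
    have h2 := hf.dist_le_mul z (hCS hz) y hy
    rw [Real.dist_eq, dist_comm z y] at h2
    linarith [le_abs_self (f z - f y)]
  have hK0 : (0 : ℝ) ≤ K := K.coe_nonneg
  -- Passing to the infimum over `z ∈ C` gives `Khat * d ≤ K * d` with `d > 0`.
  rcases hK0.eq_or_lt with h0 | hpos
  · have h := key x hx
    rw [← h0, zero_mul] at h
    rw [← h0] at hK
    exact absurd (mul_pos hK hd) (not_lt.2 h)
  · have h : Khat * Metric.infDist y C / K ≤ Metric.infDist y C :=
      (Metric.le_infDist hCne).2 fun {z} hz => (div_le_iff₀' hpos).2 (key z hz)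
    rw [div_le_iff₀' hpos] at h
    exact absurd (mul_lt_mul_of_pos_right hK hd) (not_lt.2 h)
end

section
/- Let X be a real Banach space, let C ⊆ X be a nonempty closed set, and let x ∈ C. Then the normal cone equals the weak-star closure of the cone generated by the Clarke subdifferential of the distance function: N_C(x) = cl*{ ⋃_{λ ≥ 0} λ·∂°d_C(x) }, where cl* denotes closure in the weak-star topology of X*. -/
/-!
Write `p v = d_C°(x; v)`. For a Lipschitz function the Clarke derivative is a finite sublinear
function of the direction, and `0 ≤ p` because `d_C` attains its minimum `0` at `x ∈ C`.

The normal cone is weak-star closed and contains every `l • ζ` with `l ≥ 0` and `ζ ≤ p`, since `p`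
vanishes on the tangent cone. Conversely, the cone generated by `∂°d_C(x)` is convex, so a point `ζ`
outside its weak-star closure is strictly separated from it by an evaluation at some `v`: `ζ v > 0`
while `η v ≤ 0` for all `η ∈ ∂°d_C(x)`. By Hahn–Banach some `η ∈ ∂°d_C(x)` has `η v = p v`
(`exists_mem_clarkeSubdiffW_apply_eq`); hence `p v = 0`, that is, `v` is tangent, and `ζ v > 0` shows
that `ζ` is not normal.
-/

open Filter Topology Pointwise NNReal

/-- The generalized (Clarke) directional derivative of `f` at `x` in direction `v`:
`f°(x;v) = limsup_{y→x, t↓0} (f(y+tv) − f(y))/t`. -/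
noncomputable def clarkeDeriv {X : Type*} [NormedAddCommGroup X] [NormedSpace ℝ X]
    (f : X → ℝ) (x v : X) : ℝ :=
  Filter.limsup (fun p : X × ℝ => (f (p.1 + p.2 • v) - f p.1) / p.2)
    ((𝓝 x) ×ˢ (𝓝[>] (0 : ℝ)))

/-- The Clarke subdifferential `∂°f(x) = {ζ ∈ X* : ζ(v) ≤ f°(x;v) for all v}`. -/
def clarkeSubdiff {X : Type*} [NormedAddCommGroup X] [NormedSpace ℝ X]
    (f : X → ℝ) (x : X) : Set (X →L[ℝ] ℝ) :=
  {ζ | ∀ v, ζ v ≤ clarkeDeriv f x v}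

/-- The contingent (tangent) cone `T_C(x) = {v : d_C°(x;v) = 0}`. -/
noncomputable def contingentCone {X : Type*} [NormedAddCommGroup X] [NormedSpace ℝ X]
    (C : Set X) (x : X) : Set X :=
  {v | clarkeDeriv (fun y => Metric.infDist y C) x v = 0}

/-- The normal cone viewed in the weak-star dual. -/
noncomputable def normalConeW {X : Type*} [NormedAddCommGroup X] [NormedSpace ℝ X]
    (C : Set X) (x : X) : Set (WeakDual ℝ X) :=
  {ζ | ∀ v ∈ contingentCone C x, ζ v ≤ 0}

/-- The Clarke subdifferential viewed in the weak-star dual. -/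
noncomputable def clarkeSubdiffW {X : Type*} [NormedAddCommGroup X] [NormedSpace ℝ X]
    (f : X → ℝ) (x : X) : Set (WeakDual ℝ X) :=
  {ζ | ∀ v, ζ v ≤ clarkeDeriv f x v}

section ClarkeDerivative

variable {X : Type*} [NormedAddCommGroup X] [NormedSpace ℝ X]

lemma eventually_abs_quotient_le {f : X → ℝ} (hf : LipschitzWith 1 f) (x v : X) :
    ∀ᶠ p : X × ℝ in (𝓝 x) ×ˢ (𝓝[>] (0 : ℝ)),
      |(f (p.1 + p.2 • v) - f p.1) / p.2| ≤ ‖v‖ := by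
  have h : ∀ᶠ p : X × ℝ in (𝓝 x) ×ˢ (𝓝[>] (0 : ℝ)), 0 < p.2 :=
    tendsto_snd.eventually self_mem_nhdsWithin
  filter_upwards [h] with p hp
  have h1 := hf.dist_le_mul (p.1 + p.2 • v) p.1
  rw [Real.dist_eq, dist_eq_norm, add_sub_cancel_left, norm_smul, Real.norm_eq_abs,
    abs_of_pos hp, NNReal.coe_one, one_mul] at h1
  rw [abs_div, abs_of_pos hp, div_le_iff₀ hp]
  linarith

lemma isBoundedUnder_quotient {f : X → ℝ} (hf : LipschitzWith 1 f) (x v : X) :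
    IsBoundedUnder (· ≤ ·) ((𝓝 x) ×ˢ (𝓝[>] (0 : ℝ)))
      (fun p : X × ℝ => (f (p.1 + p.2 • v) - f p.1) / p.2) :=
  ⟨‖v‖, eventually_map.2 <| (eventually_abs_quotient_le hf x v).mono
    fun _ hp => (abs_le.1 hp).2⟩

lemma isCoboundedUnder_quotient {f : X → ℝ} (hf : LipschitzWith 1 f) (x v : X) :
    IsCoboundedUnder (· ≤ ·) ((𝓝 x) ×ˢ (𝓝[>] (0 : ℝ)))
      (fun p : X × ℝ => (f (p.1 + p.2 • v) - f p.1) / p.2) := by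
  refine IsBoundedUnder.isCoboundedUnder_le ⟨-‖v‖, eventually_map.2 ?_⟩
  exact (eventually_abs_quotient_le hf x v).mono fun _ hp => (abs_le.1 hp).1

lemma eventually_quotient_lt {f : X → ℝ} (hf : LipschitzWith 1 f) {x v : X} {a : ℝ}
    (h : clarkeDeriv f x v < a) :
    ∀ᶠ p : X × ℝ in (𝓝 x) ×ˢ (𝓝[>] (0 : ℝ)), (f (p.1 + p.2 • v) - f p.1) / p.2 < a :=
  eventually_lt_of_limsup_lt h (isBoundedUnder_quotient hf x v)

lemma clarkeDeriv_le_of_eventually {f : X → ℝ} (hf : LipschitzWith 1 f) {x v : X} {a : ℝ}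
    (h : ∀ᶠ p : X × ℝ in (𝓝 x) ×ˢ (𝓝[>] (0 : ℝ)), (f (p.1 + p.2 • v) - f p.1) / p.2 ≤ a) :
    clarkeDeriv f x v ≤ a :=
  limsup_le_of_le (isCoboundedUnder_quotient hf x v) h

lemma clarkeDeriv_le_norm {f : X → ℝ} (hf : LipschitzWith 1 f) (x v : X) :
    clarkeDeriv f x v ≤ ‖v‖ :=
  clarkeDeriv_le_of_eventually hf
    ((eventually_abs_quotient_le hf x v).mono fun _ hp => (abs_le.1 hp).2)

lemma clarkeDeriv_add_le {f : X → ℝ} (hf : LipschitzWith 1 f) (x v w : X) :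
    clarkeDeriv f x (v + w) ≤ clarkeDeriv f x v + clarkeDeriv f x w := by
  refine le_of_forall_pos_le_add fun ε hε => clarkeDeriv_le_of_eventually hf ?_
  -- The increment along `v + w` splits at `y + t • w`, which tends to `x` together with `y`.
  have hshift : Tendsto (fun p : X × ℝ => (p.1 + p.2 • w, p.2))
      ((𝓝 x) ×ˢ (𝓝[>] (0 : ℝ))) ((𝓝 x) ×ˢ (𝓝[>] (0 : ℝ))) := by
    refine Tendsto.prodMk ?_ tendsto_snd
    have h2 : Tendsto (fun p : X × ℝ => p.2) ((𝓝 x) ×ˢ (𝓝[>] (0 : ℝ))) (𝓝 0) :=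
      tendsto_snd.mono_right nhdsWithin_le_nhds
    have h1 : Tendsto (fun p : X × ℝ => p.1) ((𝓝 x) ×ˢ (𝓝[>] (0 : ℝ))) (𝓝 x) := tendsto_fst
    simpa using h1.add (h2.smul_const w)
  have hv := hshift.eventually
    (eventually_quotient_lt hf (lt_add_of_pos_right (clarkeDeriv f x v) (half_pos hε)))
  have hw := eventually_quotient_lt hf (lt_add_of_pos_right (clarkeDeriv f x w) (half_pos hε))
  filter_upwards [hv, hw] with p h1 h2
  have e : p.1 + p.2 • (v + w) = p.1 + p.2 • w + p.2 • v := by rw [smul_add]; abel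
  have e2 : (f (p.1 + p.2 • (v + w)) - f p.1) / p.2
      = (f (p.1 + p.2 • w + p.2 • v) - f (p.1 + p.2 • w)) / p.2
        + (f (p.1 + p.2 • w) - f p.1) / p.2 := by
    rw [e]; ring
  rw [e2]
  linarith

lemma clarkeDeriv_smul_le {f : X → ℝ} (hf : LipschitzWith 1 f) (x v : X) {c : ℝ} (hc : 0 < c) :
    clarkeDeriv f x (c • v) ≤ c * clarkeDeriv f x v := by
  refine le_of_forall_pos_le_add fun ε hε => clarkeDeriv_le_of_eventually hf ?_
  have hscale : Tendsto (fun p : X × ℝ => (p.1, p.2 * c))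
      ((𝓝 x) ×ˢ (𝓝[>] (0 : ℝ))) ((𝓝 x) ×ˢ (𝓝[>] (0 : ℝ))) := by
    refine Tendsto.prodMk tendsto_fst (tendsto_nhdsWithin_iff.2 ⟨?_, ?_⟩)
    · have h2 : Tendsto (fun p : X × ℝ => p.2) ((𝓝 x) ×ˢ (𝓝[>] (0 : ℝ))) (𝓝 0) :=
        tendsto_snd.mono_right nhdsWithin_le_nhds
      simpa using h2.mul_const c
    · have h : ∀ᶠ p : X × ℝ in (𝓝 x) ×ˢ (𝓝[>] (0 : ℝ)), 0 < p.2 :=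
        tendsto_snd.eventually self_mem_nhdsWithin
      exact h.mono fun p hp => mul_pos hp hc
  filter_upwards [hscale.eventually (eventually_quotient_lt hf
    (lt_add_of_pos_right (clarkeDeriv f x v) (div_pos hε hc)))] with p h1
  have e : (f (p.1 + p.2 • c • v) - f p.1) / p.2
      = c * ((f (p.1 + (p.2 * c) • v) - f p.1) / (p.2 * c)) := by
    rw [smul_smul]; field_simp
  rw [e]
  refine (mul_le_mul_of_nonneg_left h1.le hc.le).trans_eq ?_
  field_simp

lemma clarkeDeriv_smul {f : X → ℝ} (hf : LipschitzWith 1 f) (x v : X) {c : ℝ} (hc : 0 < c) :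
    clarkeDeriv f x (c • v) = c * clarkeDeriv f x v := by
  refine le_antisymm (clarkeDeriv_smul_le hf x v hc) ?_
  have h := clarkeDeriv_smul_le hf x (c • v) (inv_pos.2 hc)
  rwa [inv_smul_smul₀ hc.ne', ← div_eq_inv_mul, le_div_iff₀' hc] at h

/-- At a global minimum the difference quotients based at `x` itself are nonnegative. -/
lemma clarkeDeriv_nonneg_of_min {f : X → ℝ} (hf : LipschitzWith 1 f) {x : X}
    (hmin : ∀ y, f x ≤ f y) (v : X) : 0 ≤ clarkeDeriv f x v := by
  by_contra! h
  have h1 := (eventually_quotient_lt hf h).curry.self_of_nhds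
  obtain ⟨t, ht, ht0⟩ := (h1.and self_mem_nhdsWithin).exists
  exact absurd ht (not_lt.2 (div_nonneg (sub_nonneg.2 (hmin _)) (le_of_lt ht0)))

/-- When the Clarke derivative is nonnegative, it is the support function of the
subdifferential and the supremum is attained, by Hahn–Banach applied on the line through `v`. -/
lemma exists_mem_clarkeSubdiffW_apply_eq {f : X → ℝ} (hf : LipschitzWith 1 f) {x : X}
    (h0 : ∀ v, 0 ≤ clarkeDeriv f x v) {v : X} (hv : v ≠ 0) :
    ∃ η ∈ clarkeSubdiffW f x, η v = clarkeDeriv f x v := by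
  obtain ⟨g, hg, hgle⟩ := exists_extension_of_le_sublinear
    (LinearPMap.mkSpanSingleton v (clarkeDeriv f x v) hv) (clarkeDeriv f x)
    (fun c hc w => clarkeDeriv_smul hf x w hc) (clarkeDeriv_add_le hf x) (by
      rintro ⟨w, hw⟩
      obtain ⟨t, rfl⟩ := Submodule.mem_span_singleton.1 hw
      rw [LinearPMap.mkSpanSingleton'_apply]
      rcases lt_or_ge 0 t with ht | ht
      · exact (clarkeDeriv_smul hf x v ht).ge
      · exact (mul_nonpos_of_nonpos_of_nonneg ht (h0 v)).trans (h0 _))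
  let G : X →L[ℝ] ℝ := g.mkContinuous 1 (fun w => by
    rw [one_mul, Real.norm_eq_abs, abs_le]
    have h1 := (hgle w).trans (clarkeDeriv_le_norm hf x w)
    have h2 := (hgle (-w)).trans (clarkeDeriv_le_norm hf x (-w))
    rw [map_neg, norm_neg] at h2
    exact ⟨by linarith, h1⟩)
  refine ⟨StrongDual.toWeakDual G, fun w => hgle w, ?_⟩
  have h := hg ⟨v, Submodule.mem_span_singleton_self v⟩
  rw [LinearPMap.mkSpanSingleton_apply] at h
  exact h

lemma convex_cone_clarkeSubdiffW (f : X → ℝ) (x : X) :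
    Convex ℝ (⋃ l ∈ Set.Ici (0 : ℝ), l • clarkeSubdiffW f x) := by
  have hS : Convex ℝ (clarkeSubdiffW f x) := by
    intro η hη ξ hξ a b ha hb hab v
    have h1 := mul_le_mul_of_nonneg_left (hη v) ha
    have h2 := mul_le_mul_of_nonneg_left (hξ v) hb
    change a * η v + b * ξ v ≤ clarkeDeriv f x v
    calc _ ≤ a * clarkeDeriv f x v + b * clarkeDeriv f x v := add_le_add h1 h2
      _ = _ := by rw [← add_mul, hab, one_mul]
  intro η hη ξ hξ a b ha hb _
  simp only [Set.mem_iUnion, Set.mem_Ici, exists_prop] at hη hξ ⊢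
  obtain ⟨l, hl, hη⟩ := hη
  obtain ⟨m, hm, hξ⟩ := hξ
  refine ⟨a * l + b * m, by positivity, ?_⟩
  rw [hS.add_smul (by positivity) (by positivity), mul_smul, mul_smul]
  exact Set.add_mem_add (Set.smul_mem_smul_set hη) (Set.smul_mem_smul_set hξ)

lemma isClosed_normalConeW (C : Set X) (x : X) : IsClosed (normalConeW C x) := by
  simp only [normalConeW, Set.ofPred_forall]
  exact isClosed_iInter fun v => isClosed_iInter fun _ =>
    isClosed_le (WeakDual.eval_continuous v) continuous_const

end ClarkeDerivative

/-- The normal cone equals the weak-star closure of the cone generated by the Clarke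
subdifferential of the distance function: `N_C(x) = cl*{⋃_{λ≥0} λ·∂°d_C(x)}`. -/
theorem normalCone_eq_closure_cone_clarkeSubdiff_infDist
    {X : Type*} [NormedAddCommGroup X] [NormedSpace ℝ X] [CompleteSpace X]
    (C : Set X) (hCne : C.Nonempty) (hCclosed : IsClosed C) (x : X) (hx : x ∈ C) :
    normalConeW C x =
      closure (⋃ l ∈ Set.Ici (0 : ℝ), l • clarkeSubdiffW (fun y => Metric.infDist y C) x) := by
  have hf : LipschitzWith 1 (fun y => Metric.infDist y C) := Metric.lipschitz_infDist_pt C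
  have h0 : ∀ v, 0 ≤ clarkeDeriv (fun y => Metric.infDist y C) x v :=
    clarkeDeriv_nonneg_of_min hf fun y => by
      rw [Metric.infDist_zero_of_mem hx]; exact Metric.infDist_nonneg
  apply Set.Subset.antisymm
  · intro ζ hζ
    by_contra hnot
    have : LocallyConvexSpace ℝ (WeakDual ℝ X) :=
      WeakBilin.locallyConvexSpace (B := topDualPairing ℝ X)
    obtain ⟨F, u, hlt, hu⟩ := geometric_hahn_banach_closed_point
      (convex_cone_clarkeSubdiffW (fun y => Metric.infDist y C) x).closure isClosed_closure hnot
    -- Weak-star continuous functionals are evaluations.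
    obtain ⟨v, rfl⟩ := LinearMap.dualEmbedding_surjective (topDualPairing ℝ X) F
    have hcone : ∀ l : ℝ, 0 ≤ l → ∀ η ∈ clarkeSubdiffW (fun y => Metric.infDist y C) x,
        l * η v < u := by
      intro l hl η hη
      exact hlt (l • η) (subset_closure
        (Set.mem_biUnion (Set.mem_Ici.2 hl) (Set.smul_mem_smul_set hη)))
    have hu0 : 0 < u := by
      simpa using hcone 0 le_rfl 0 (fun w => h0 w)
    have hζv : 0 < ζ v := hu0.trans hu
    have hv : v ≠ 0 := by
      rintro rfl
      simp at hζv
    obtain ⟨η, hη, hηv⟩ := exists_mem_clarkeSubdiffW_apply_eq hf h0 hv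
    have hT : v ∈ contingentCone C x := by
      refine le_antisymm ?_ (h0 v)
      by_contra! hpos
      -- A positive value of `η v` would make the multiple by `l = u / η v` reach the level `u`.
      have h := hcone (u / η v) (by rw [hηv]; positivity) η hη
      rw [hηv, div_mul_cancel₀ _ hpos.ne'] at h
      exact lt_irrefl _ h
    exact absurd (hζ v hT) (not_le.2 hζv)
  · refine closure_minimal ?_ (isClosed_normalConeW C x)
    intro ξ hξ v hv
    simp only [Set.mem_iUnion, Set.mem_Ici, exists_prop] at hξ
    obtain ⟨l, hl, η, hη, rfl⟩ := hξ
    exact mul_nonpos_of_nonneg_of_nonpos hl ((hη v).trans_eq hv)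
end

section
/- Let (Ω, F, P) be a probability space and let u : ℝ → ℝ be continuously differentiable with bounded derivative u'. Define f : L²(Ω, P; ℝ) → ℝ by f(ξ) := E[u(ξ)] = ∫_Ω u(ξ(ω)) dP(ω). Then f is well defined and Fréchet differentiable at every ξ ∈ L²(Ω, P; ℝ), with derivative the continuous linear functional ζ ↦ E[u'(ξ)·ζ] = ∫_Ω u'(ξ(ω))·ζ(ω) dP(ω). -/
/-!
Write `u b - u a - u' a * (b - a) = q a b * (b - a)`, where `q = slopeDefect u` is bounded by `2 * M`
and `q a b → 0` as `b → a`. Then `E[u η] - E[u ξ] - E[u' ξ * (η - ξ)] = E[q ξ η * (η - ξ)]` is an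
`L²` inner product, so Cauchy–Schwarz bounds it by `‖q ξ η‖ * ‖η - ξ‖` in `L²` norms. It remains to
see that `E[(q ξ η)²] → 0` as `η → ξ` in `L²` (`tendsto_integral_slopeDefect_sq`): every sequence
converging to `ξ` in `L²` has a subsequence converging almost everywhere, and along it bounded
convergence applies.
-/

open MeasureTheory

open Filter Topology

/-- The slope of `u` between `a` and `b` minus the derivative of `u` at `a`; the value at `b = a`
is `0`, by the convention on division by zero. -/
noncomputable def slopeDefect (u : ℝ → ℝ) (a b : ℝ) : ℝ :=
  (u b - u a - deriv u a * (b - a)) / (b - a)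

lemma slopeDefect_mul (u : ℝ → ℝ) (a b : ℝ) :
    slopeDefect u a b * (b - a) = u b - u a - deriv u a * (b - a) := by
  unfold slopeDefect
  rcases eq_or_ne b a with rfl | h
  · simp
  · exact div_mul_cancel₀ _ (sub_ne_zero.2 h)

lemma abs_sub_le_of_abs_deriv_le {u : ℝ → ℝ} (hu : Differentiable ℝ u) {M : ℝ}
    (hM : ∀ t, |deriv u t| ≤ M) (a b : ℝ) : |u b - u a| ≤ M * |b - a| :=
  convex_univ.norm_image_sub_le_of_norm_deriv_le (fun x _ => hu x) (fun x _ => hM x)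
    (Set.mem_univ a) (Set.mem_univ b)

lemma abs_slopeDefect_le {u : ℝ → ℝ} (hu : Differentiable ℝ u) {M : ℝ}
    (hM : ∀ t, |deriv u t| ≤ M) (a b : ℝ) : |slopeDefect u a b| ≤ 2 * M := by
  have hM0 : 0 ≤ M := (abs_nonneg _).trans (hM 0)
  unfold slopeDefect
  rw [abs_div]
  refine div_le_of_le_mul₀ (abs_nonneg _) (by positivity) ?_
  calc |u b - u a - deriv u a * (b - a)|
      ≤ |u b - u a| + |deriv u a * (b - a)| := abs_sub _ _
    _ ≤ M * |b - a| + M * |b - a| := by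
        rw [abs_mul]
        gcongr
        · exact abs_sub_le_of_abs_deriv_le hu hM a b
        · exact hM a
    _ = 2 * M * |b - a| := by ring

lemma tendsto_slopeDefect {u : ℝ → ℝ} (hu : Differentiable ℝ u) (a : ℝ) :
    Tendsto (slopeDefect u a) (𝓝 a) (𝓝 0) := by
  have h := (hasDerivAt_iff_isLittleO.1 (hu a).hasDerivAt).tendsto_div_nhds_zero
  refine h.congr fun b => ?_
  simp [slopeDefect, mul_comm]

lemma aestronglyMeasurable_slopeDefect {Ω : Type*} [MeasurableSpace Ω] {P : Measure Ω}
    {u : ℝ → ℝ} (hu : Differentiable ℝ u) {ξ η : Ω → ℝ} (hξ : AEStronglyMeasurable ξ P)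
    (hη : AEStronglyMeasurable η P) :
    AEStronglyMeasurable (fun ω => slopeDefect u (ξ ω) (η ω)) P := by
  have hum : Measurable u := hu.continuous.measurable
  have hdm : Measurable (deriv u) := measurable_deriv u
  have hξm := hξ.aemeasurable
  have hηm := hη.aemeasurable
  refine AEMeasurable.aestronglyMeasurable ?_
  unfold slopeDefect
  exact (((hum.comp_aemeasurable hηm).sub (hum.comp_aemeasurable hξm)).sub
    ((hdm.comp_aemeasurable hξm).mul (hηm.sub hξm))).div (hηm.sub hξm)

lemma tendsto_integral_slopeDefect_sq {Ω : Type*} [MeasurableSpace Ω] {P : Measure Ω}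
    [IsProbabilityMeasure P] {u : ℝ → ℝ} (hu : Differentiable ℝ u) {M : ℝ}
    (hM : ∀ t, |deriv u t| ≤ M) (ξ : Lp ℝ 2 P) :
    Tendsto (fun η : Lp ℝ 2 P => ∫ ω, slopeDefect u (ξ ω) (η ω) ^ 2 ∂P) (𝓝 ξ) (𝓝 0) := by
  refine tendsto_of_subseq_tendsto fun x hx => ?_
  obtain ⟨ns, -, hns⟩ := (tendstoInMeasure_of_tendsto_Lp hx).exists_seq_tendsto_ae
  refine ⟨ns, ?_⟩
  rw [← integral_zero Ω ℝ (μ := P)]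
  refine tendsto_integral_of_dominated_convergence (fun _ => (2 * M) ^ 2)
    (fun n => (aestronglyMeasurable_slopeDefect hu (Lp.aestronglyMeasurable _)
      (Lp.aestronglyMeasurable _)).pow 2) (integrable_const _) (fun n => .of_forall fun ω => ?_) ?_
  · rw [Real.norm_eq_abs, abs_pow]
    exact pow_le_pow_left₀ (abs_nonneg _) (abs_slopeDefect_le hu hM _ _) 2
  · filter_upwards [hns] with ω hω
    simpa using ((tendsto_slopeDefect hu (ξ ω)).comp hω).pow 2

lemma integrable_comp_of_abs_deriv_le {Ω : Type*} [MeasurableSpace Ω] {P : Measure Ω}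
    [IsProbabilityMeasure P] {u : ℝ → ℝ} (hu : Differentiable ℝ u) {M : ℝ}
    (hM : ∀ t, |deriv u t| ≤ M) (ξ : Lp ℝ 2 P) : Integrable (fun ω => u (ξ ω)) P := by
  have hξ : Integrable ξ P := (Lp.memLp ξ).integrable one_le_two
  refine ((integrable_const |u 0|).add (hξ.abs.const_mul M)).mono'
    (hu.continuous.comp_aestronglyMeasurable hξ.1) (.of_forall fun ω => ?_)
  have h := abs_sub_le_of_abs_deriv_le hu hM 0 (ξ ω)
  rw [sub_zero] at h
  have habs := abs_sub_abs_le_abs_sub (u (ξ ω)) (u 0)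
  simp only [Real.norm_eq_abs, Pi.add_apply]
  linarith

/-- If `u : ℝ → ℝ` is continuously differentiable with bounded derivative, then
`f(ξ) := E[u(ξ)]` is well defined on `L²(Ω,P;ℝ)` and Fréchet differentiable at every
`ξ`, with derivative `ζ ↦ E[u'(ξ)·ζ]`. -/
theorem expectation_comp_frechet_differentiable
    {Ω : Type*} [MeasurableSpace Ω] (P : Measure Ω) [IsProbabilityMeasure P]
    (u : ℝ → ℝ) (hu : ContDiff ℝ 1 u) (M : ℝ) (hM : ∀ t : ℝ, |deriv u t| ≤ M)
    (ξ : Lp ℝ 2 P) :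
    Integrable (fun ω => u (ξ ω)) P ∧
    ∃ D : Lp ℝ 2 P →L[ℝ] ℝ,
      (∀ ζ : Lp ℝ 2 P, D ζ = ∫ ω, deriv u (ξ ω) * ζ ω ∂P) ∧
      HasFDerivAt (fun η : Lp ℝ 2 P => ∫ ω, u (η ω) ∂P) D ξ := by
  have hd : Differentiable ℝ u := hu.differentiable one_ne_zero
  refine ⟨integrable_comp_of_abs_deriv_le hd hM ξ, ?_⟩
  have hdmem : MemLp (fun ω => deriv u (ξ ω)) 2 P :=
    MemLp.of_bound ((measurable_deriv u).comp_aemeasurable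
      (Lp.aestronglyMeasurable ξ).aemeasurable).aestronglyMeasurable M (.of_forall fun ω => hM _)
  have inner_toLp : ∀ {g : Ω → ℝ} (hg : MemLp g 2 P) (ζ : Lp ℝ 2 P),
      inner ℝ (hg.toLp g) ζ = ∫ ω, g ω * ζ ω ∂P := fun {g} hg ζ => by
    rw [L2.inner_def]
    refine integral_congr_ae ?_
    filter_upwards [hg.coeFn_toLp] with ω hω
    simp [hω, mul_comm]
  refine ⟨innerSL ℝ (hdmem.toLp _), fun ζ => inner_toLp hdmem ζ, ?_⟩
  have hqmem : ∀ η : Lp ℝ 2 P, MemLp (fun ω => slopeDefect u (ξ ω) (η ω)) 2 P := fun η =>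
    MemLp.of_bound (aestronglyMeasurable_slopeDefect hd (Lp.aestronglyMeasurable _)
      (Lp.aestronglyMeasurable _)) (2 * M) (.of_forall fun ω => abs_slopeDefect_le hd hM _ _)
  have hqnorm : ∀ η : Lp ℝ 2 P,
      ‖(hqmem η).toLp _‖ ^ 2 = ∫ ω, slopeDefect u (ξ ω) (η ω) ^ 2 ∂P := fun η => by
    rw [← real_inner_self_eq_norm_sq, inner_toLp]
    refine integral_congr_ae ?_
    filter_upwards [(hqmem η).coeFn_toLp] with ω hω
    rw [hω, sq]
  have hrem : ∀ η : Lp ℝ 2 P, (∫ ω, u (η ω) ∂P) - (∫ ω, u (ξ ω) ∂P)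
      - innerSL ℝ (hdmem.toLp _) (η - ξ) = inner ℝ ((hqmem η).toLp _) (η - ξ) := fun η => by
    have hη := integrable_comp_of_abs_deriv_le hd hM η
    have hξ := integrable_comp_of_abs_deriv_le hd hM ξ
    have hsub : Integrable (fun ω => u (η ω) - u (ξ ω)) P := hη.sub hξ
    have hmul : Integrable (fun ω => deriv u (ξ ω) * (η - ξ : Lp ℝ 2 P) ω) P :=
      hdmem.integrable_mul (Lp.memLp _)
    rw [innerSL_apply_apply, inner_toLp, inner_toLp, ← integral_sub hη hξ, ← integral_sub hsub hmul]
    refine integral_congr_ae ?_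
    filter_upwards [Lp.coeFn_sub η ξ] with ω hω
    simp only [hω, Pi.sub_apply, slopeDefect_mul]
  refine .of_isLittleO (Asymptotics.isLittleO_iff.2 fun c hc => ?_)
  filter_upwards [(tendsto_integral_slopeDefect_sq hd hM ξ).eventually_lt_const
    (pow_pos hc 2)] with η hη
  rw [hrem η]
  refine (norm_inner_le_norm _ _).trans ?_
  gcongr
  rw [← hqnorm η] at hη
  exact (lt_of_pow_lt_pow_left₀ 2 hc.le hη).le
end
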